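/- (Zassenhaus grading element) Let g = ⊕_{i ∈ ℤ} g^i be a finite-dimensional semisimple ℤ-graded Lie algebra over a field of characteristic zero, with bracket-compatible grading. Then there exists a unique element x ∈ g^0 such that [x, y] = i·y for all y ∈ g^i and all i. -/

import Mathlib

/-!
Scaling each homogeneous component by an additive function `φ` of its degree is a derivation, and
every derivation of a Lie algebra with nondegenerate Killing form is inner, so some `x` acts in this
way. If `y` has degree `i`, then `⁅x, y⁆ = φ i • y` has degree `i` too, so only the degree-zero
component of `x` contributes to it. That component therefore acts as `x` does, and as the adjoint
representation is faithful, it equals `x`; faithfulness also gives uniqueness.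
-/

section

open DirectSum

variable {ι R L : Type*} [CommRing R] [LieRing L] [LieAlgebra R L]

theorem eq_of_forall_mem_lie_eq [DecidableEq ι] {M : Type*} [AddCommGroup M] [Module R M]
    [LieRingModule L M] [LieModule R L M] [LieModule.IsFaithful R L M]
    (ℳ : ι → Submodule R M) [Decomposition ℳ] {x x' : L}
    (h : ∀ i, ∀ m ∈ ℳ i, ⁅x, m⁆ = ⁅x', m⁆) : x = x' :=
  LieModule.IsFaithful.injective_toEnd (R := R) (M := M) <|
    decompose_lhom_ext ℳ fun i ↦ LinearMap.ext fun m ↦ h i m m.2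

variable [DecidableEq ι] [AddCancelCommMonoid ι] (ℒ : ι → Submodule R L) [GradedLieAlgebra ℒ]

theorem coe_decompose_lie_add_of_right_mem {i j : ι} {a b : L} (hb : b ∈ ℒ j) :
    (decompose ℒ ⁅a, b⁆ (i + j) : L) = ⁅(decompose ℒ a i : L), b⁆ := by
  induction a using Decomposition.inductionOn ℒ with
  | zero => simp
  | add a a' ha ha' =>
    simp only [add_lie, decompose_add, DirectSum.add_apply, Submodule.coe_add, ha, ha']
  | @homogeneous k a =>
    have hab : ⁅(a : L), b⁆ ∈ ℒ (k + j) := SetLike.GradedBracket.bracket_mem a.2 hb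
    obtain rfl | hki := eq_or_ne k i
    · rw [decompose_of_mem_same ℒ hab, decompose_of_mem_same ℒ a.2]
    · rw [decompose_of_mem_ne ℒ hab (by simpa using hki), decompose_of_mem_ne ℒ a.2 hki, zero_lie]

theorem coe_decompose_zero_lie_of_lie_mem {i : ι} {x y : L} (hy : y ∈ ℒ i) (hxy : ⁅x, y⁆ ∈ ℒ i) :
    ⁅(decompose ℒ x 0 : L), y⁆ = ⁅x, y⁆ := by
  rw [← coe_decompose_lie_add_of_right_mem ℒ hy, zero_add, decompose_of_mem_same ℒ hxy]

theorem mem_zero_of_forall_lie_mem [LieModule.IsFaithful R L L] {x : L}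
    (hx : ∀ i, ∀ y ∈ ℒ i, ⁅x, y⁆ ∈ ℒ i) : x ∈ ℒ 0 := by
  have hx₀ : (decompose ℒ x 0 : L) = x := eq_of_forall_mem_lie_eq ℒ fun i y hy ↦
    coe_decompose_zero_lie_of_lie_mem ℒ hy (hx i y hy)
  exact hx₀ ▸ (decompose ℒ x 0).2

end

theorem exists_unique_grading_element_general
    {ι K L : Type*} [DecidableEq ι] [AddCancelCommMonoid ι] [Field K] [LieRing L] [LieAlgebra K L]
    [FiniteDimensional K L] [LieAlgebra.IsKilling K L]
    (ℒ : ι → Submodule K L) [GradedLieAlgebra ℒ] (φ : ι →+ K) :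
    ∃! x : L, x ∈ ℒ 0 ∧ ∀ i, ∀ y ∈ ℒ i, ⁅x, y⁆ = φ i • y := by
  obtain ⟨x, had⟩ := LieDerivation.IsKilling.exists_eq_ad (LieDerivation.ofGrading ℒ φ)
  have hx : ∀ i, ∀ y ∈ ℒ i, ⁅x, y⁆ = φ i • y := fun i y hy ↦ by
    rw [← LieDerivation.ofGrading_apply_apply ℒ φ hy, ← had, LieDerivation.ad_apply_apply]
  have hx₀ : x ∈ ℒ 0 := mem_zero_of_forall_lie_mem ℒ fun i y hy ↦
    hx i y hy ▸ (ℒ i).smul_mem (φ i) hy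
  exact ⟨x, ⟨hx₀, hx⟩, fun x' hx' ↦ eq_of_forall_mem_lie_eq ℒ fun i y hy ↦
    (hx'.2 i y hy).trans (hx i y hy).symm⟩

/-- Zassenhaus grading element: A finite-dimensional semisimple
ℤ-graded Lie algebra over a characteristic-zero field has a unique element `x ∈ g⁰`
with `[x, y] = i • y` for all `y ∈ gⁱ` and all `i`. -/
theorem exists_unique_grading_element
    {K L : Type*} [Field K] [CharZero K] [LieRing L] [LieAlgebra K L]
    [FiniteDimensional K L] [LieAlgebra.IsSemisimple K L]
    (G : ℤ → Submodule K L)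
    (hG : DirectSum.IsInternal G)
    (hbr : ∀ i j : ℤ, ∀ x ∈ G i, ∀ y ∈ G j, ⁅x, y⁆ ∈ G (i + j)) :
    ∃! x : L, x ∈ G 0 ∧ ∀ i : ℤ, ∀ y ∈ G i, ⁅x, y⁆ = i • y := by
  let _ : GradedLieAlgebra G :=
    { hG.chooseDecomposition with bracket_mem := fun i j a b ha hb ↦ hbr i j a ha b hb }
  simpa only [Int.coe_castAddHom, Int.cast_smul_eq_zsmul] using
    exists_unique_grading_element_general G (Int.castAddHom K)
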